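/- Conversely, if f : 𝕋^d → ℂ has Fourier coefficients satisfying |f̂(k)| ≤ exp(-C^(-1/s)·|k|^(1/s)) for all k ∈ ℤ^d and some C > 0, s ≥ 1, then f is smooth and s-Gevrey: there exists C' > 0 with ‖D^α f‖_∞ ≤ C'^(|α|+1)(α!)^s for all multi-indices α. -/

import Mathlib

open scoped Real

/-- Partial derivative in the `i`-th coordinate direction. -/
noncomputable def pderivDir {d : ℕ} (i : Fin d) (f : (Fin d → ℝ) → ℂ) : (Fin d → ℝ) → ℂ :=
  fun x => fderiv ℝ f x (Pi.single i 1)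

/-- Iterated partial derivative `D^α f` for a multi-index `α`. -/
noncomputable def multiDeriv {d : ℕ} (α : Fin d → ℕ) (f : (Fin d → ℝ) → ℂ) : (Fin d → ℝ) → ℂ :=
  ((List.ofFn fun i : Fin d => (pderivDir i)^[α i]).foldr (· ∘ ·) id) f

/-!
For every rate `b > 0`, the elementary bound `wⁿ ≤ n! exp w` at `w = (b / s) t ^ (1 / s)`,
raised to the power `s`, reads `tⁿ ≤ (s / b) ^ (s n) (n!) ^ s exp (b t ^ (1 / s))`.
Differentiating the Fourier series termwise multiplies the `k`-th coefficient by a product of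
`|α|` factors of size at most `‖k‖`. Spending the fraction `d / (d + 1)` of the exponential
decay of the coefficients on these factors, one share for each coordinate, leaves the Gevrey
bound times a series that is still summable.
-/

section StretchedExponential

variable {b s t : ℝ}

lemma pow_le_factorial_rpow_mul_exp_rpow (hb : 0 < b) (hs : 0 < s) (ht : 0 ≤ t) (n : ℕ) :
    t ^ n ≤ ((s / b) ^ s) ^ n * (n.factorial : ℝ) ^ s * Real.exp (b * t ^ (1 / s)) := by
  set w : ℝ := b / s * t ^ (1 / s) with hw
  have hw0 : 0 ≤ w := by positivity
  have pow_le : w ^ n ≤ n.factorial * Real.exp w := by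
    have := Real.pow_div_factorial_le_exp w hw0 n
    rwa [div_le_iff₀' (by positivity)] at this
  have ht_eq : t = (s / b) ^ s * w ^ s := by
    have : s / b * w = t ^ (1 / s) := by rw [hw]; field_simp
    rw [← Real.mul_rpow (by positivity) hw0, this, one_div, Real.rpow_inv_rpow ht hs.ne']
  have exp_eq : Real.exp (b * t ^ (1 / s)) = Real.exp w ^ s := by
    rw [← Real.exp_mul, hw]
    congr 1
    field_simp
  calc t ^ n = ((s / b) ^ s) ^ n * (w ^ n) ^ s := by
        rw [← Real.rpow_pow_comm hw0, ← mul_pow, ← ht_eq]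
    _ ≤ ((s / b) ^ s) ^ n * (n.factorial * Real.exp w) ^ s := by gcongr
    _ = _ := by rw [Real.mul_rpow (by positivity) (by positivity), exp_eq, mul_assoc]

variable {ι : Type*} [Fintype ι]

lemma pow_sum_le_prod_factorial_rpow_mul_exp_rpow (hb : 0 < b) (hs : 0 < s) (ht : 0 ≤ t)
    (α : ι → ℕ) :
    t ^ (∑ i, α i) ≤ ((s / b) ^ s) ^ (∑ i, α i) * ((∏ i, (α i).factorial : ℕ) : ℝ) ^ s *
      Real.exp (Fintype.card ι * b * t ^ (1 / s)) :=
  calc t ^ (∑ i, α i) = ∏ i, t ^ α i := (Finset.prod_pow_eq_pow_sum _ _ _).symm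
    _ ≤ ∏ i, (((s / b) ^ s) ^ α i * ((α i).factorial : ℝ) ^ s * Real.exp (b * t ^ (1 / s))) := by
        gcongr with i
        exact pow_le_factorial_rpow_mul_exp_rpow hb hs ht (α i)
    _ = _ := by
        rw [Finset.prod_mul_distrib, Finset.prod_mul_distrib, Finset.prod_pow_eq_pow_sum,
          Real.finsetProd_rpow _ _ fun _ _ ↦ by positivity, Finset.prod_const, Finset.card_univ,
          ← Real.exp_nat_mul, mul_assoc (Fintype.card ι : ℝ), Nat.cast_prod]

lemma pow_sum_mul_le_of_le_exp_neg_rpow {A y : ℝ} (hb : 0 < b) (hs : 0 < s) (ht : 0 ≤ t)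
    (hy : 0 ≤ y) (hyA : y ≤ A * Real.exp (-b * t ^ (1 / s))) (α : ι → ℕ) :
    t ^ (∑ i, α i) * y ≤ A * ((s / (b / (Fintype.card ι + 1))) ^ s) ^ (∑ i, α i) *
      ((∏ i, (α i).factorial : ℕ) : ℝ) ^ s *
        Real.exp (-(b / (Fintype.card ι + 1)) * t ^ (1 / s)) := by
  set β : ℝ := b / (Fintype.card ι + 1) with hβ
  have hβ0 : 0 < β := by positivity
  have hbβ : -β = Fintype.card ι * β + -b := by rw [hβ]; field_simp; ring
  calc t ^ (∑ i, α i) * y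
      ≤ (((s / β) ^ s) ^ (∑ i, α i) * ((∏ i, (α i).factorial : ℕ) : ℝ) ^ s *
          Real.exp (Fintype.card ι * β * t ^ (1 / s))) * (A * Real.exp (-b * t ^ (1 / s))) := by
        gcongr
        exact pow_sum_le_prod_factorial_rpow_mul_exp_rpow hβ0 hs ht α
    _ = _ := by rw [hbβ, add_mul, Real.exp_add]; ring

end StretchedExponential

section LatticeSums

lemma exists_summable_norm_inv_pow_pi_int (ι : Type*) [Fintype ι] :
    ∃ n : ℕ, Summable fun k : ι → ℤ ↦ ‖k‖⁻¹ ^ n := by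
  let L := Submodule.span ℤ (Set.range (Pi.basisFun ℝ ι))
  let cast (k : ι → ℤ) : L := ⟨fun i ↦ k i,
    ((Pi.basisFun ℝ ι).mem_span_iff_repr_mem ℤ _).2 fun i ↦ ⟨k i, by simp⟩⟩
  have cast_injective : Function.Injective cast := fun k l h ↦
    funext fun i ↦ Int.cast_injective (congrFun (congrArg Subtype.val h) i)
  have norm_cast_eq (k : ι → ℤ) : ‖cast k‖ = ‖k‖ := by
    simp only [cast, Submodule.coe_norm, Pi.norm_def, nnnorm, Int.norm_cast_real]
  refine ⟨Module.finrank ℤ L + 1, ?_⟩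
  have h := (ZLattice.summable_norm_pow_inv L _ (Nat.lt_succ_self _)).comp_injective cast_injective
  exact h.congr fun k ↦ by simp only [Function.comp_apply, norm_cast_eq]

variable {ι : Type*} [Fintype ι] {a : (ι → ℤ) → ℂ} {A b s : ℝ}

lemma summable_exp_neg_mul_norm_rpow (hb : 0 < b) (hs : 0 < s) :
    Summable fun k : ι → ℤ ↦ Real.exp (-b * ‖k‖ ^ (1 / s)) := by
  obtain ⟨n, hn⟩ := exists_summable_norm_inv_pow_pi_int ι
  refine (hn.mul_left (((s / b) ^ s) ^ n * (n.factorial : ℝ) ^ s)).of_norm_bounded_eventually ?_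
  filter_upwards [(Set.finite_singleton (0 : ι → ℤ)).eventually_cofinite_notMem] with k hk
  have hk0 : 0 < ‖k‖ := norm_pos_iff.2 hk
  rw [Real.norm_of_nonneg (Real.exp_pos _).le, neg_mul, Real.exp_neg, inv_pow, ← div_eq_mul_inv,
    le_div_iff₀ (by positivity), inv_mul_le_iff₀ (Real.exp_pos _), mul_comm (Real.exp _)]
  exact pow_le_factorial_rpow_mul_exp_rpow hb hs hk0.le n

lemma summable_norm_pow_mul_norm_of_le_exp (hb : 0 < b) (hs : 0 < s)
    (ha : ∀ k, ‖a k‖ ≤ A * Real.exp (-b * ‖k‖ ^ (1 / s))) (n : ℕ) :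
    Summable fun k ↦ ‖k‖ ^ n * ‖a k‖ := by
  have term_le (k : ι → ℤ) := pow_sum_mul_le_of_le_exp_neg_rpow hb hs (norm_nonneg k)
    (norm_nonneg (a k)) (ha k) fun _ : Unit ↦ n
  have summable_sum := Summable.of_nonneg_of_le (fun k ↦ by positivity) term_le
    ((summable_exp_neg_mul_norm_rpow (by positivity) hs).mul_left _)
  simpa using summable_sum

lemma exists_tsum_norm_pow_sum_mul_norm_le_gevrey (hb : 0 < b) (hs : 0 < s)
    (ha : ∀ k, ‖a k‖ ≤ A * Real.exp (-b * ‖k‖ ^ (1 / s))) :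
    ∃ C > (0 : ℝ), ∀ α : ι → ℕ, ∑' k, ‖k‖ ^ (∑ i, α i) * ‖a k‖ ≤
      C ^ ((∑ i, α i) + 1) * ((∏ i, (α i).factorial : ℕ) : ℝ) ^ s := by
  set β : ℝ := b / (Fintype.card ι + 1)
  have hβ0 : 0 < β := by positivity
  set B : ℝ := (s / β) ^ s
  have hB0 : 0 < B := by positivity
  set S : ℝ := ∑' k : ι → ℤ, Real.exp (-β * ‖k‖ ^ (1 / s))
  refine ⟨max B (A * S), lt_max_of_lt_left hB0, fun α ↦ ?_⟩
  set P : ℝ := ((∏ i, (α i).factorial : ℕ) : ℝ) ^ s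
  have hB_le : B ≤ max B (A * S) := le_max_left _ _
  have hAS_le : A * S ≤ max B (A * S) := le_max_right _ _
  calc ∑' k, ‖k‖ ^ (∑ i, α i) * ‖a k‖
      ≤ ∑' k : ι → ℤ, A * B ^ (∑ i, α i) * P * Real.exp (-β * ‖k‖ ^ (1 / s)) :=
        (summable_norm_pow_mul_norm_of_le_exp hb hs ha _).tsum_le_tsum
          (fun k ↦ pow_sum_mul_le_of_le_exp_neg_rpow hb hs (norm_nonneg k) (norm_nonneg _)
            (ha k) α)
          ((summable_exp_neg_mul_norm_rpow hβ0 hs).mul_left _)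
    _ = A * S * (B ^ (∑ i, α i) * P) := by rw [tsum_mul_left]; ring
    _ ≤ max B (A * S) * (max B (A * S) ^ (∑ i, α i) * P) := by gcongr
    _ = max B (A * S) ^ ((∑ i, α i) + 1) * P := by ring

end LatticeSums

section TrigonometricSeries

variable {κ E : Type*} [NormedAddCommGroup E] [NormedSpace ℝ E]

/-- The trigonometric series `∑ₖ aₖ exp (i ℓₖ(x))`. Its frequencies `ℓₖ` are arbitrary continuous
linear functionals, so that no coordinates are needed to differentiate it. -/
noncomputable def trigSeries (ℓ : κ → StrongDual ℝ E) (a : κ → ℂ) (x : E) : ℂ :=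
  ∑' k, a k * Complex.exp (Complex.I * ℓ k x)

/-- The coefficients `a` decay rapidly with respect to the frequencies `ℓ`, in the form needed to
differentiate `trigSeries ℓ a` termwise any number of times. -/
def HasSummableMoments (ℓ : κ → StrongDual ℝ E) (a : κ → ℂ) : Prop :=
  ∀ n : ℕ, Summable fun k ↦ ‖ℓ k‖ ^ n * ‖a k‖

variable {ℓ : κ → StrongDual ℝ E} {a : κ → ℂ}

lemma HasSummableMoments.summable_norm (ha : HasSummableMoments ℓ a) : Summable fun k ↦ ‖a k‖ := by
  simpa using ha 0

lemma HasSummableMoments.mul_apply_pow (ha : HasSummableMoments ℓ a) (v : E) (m : ℕ) :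
    HasSummableMoments ℓ fun k ↦ a k * (Complex.I * ℓ k v) ^ m := by
  refine fun n ↦ .of_nonneg_of_le (fun _ ↦ by positivity) (fun k ↦ ?_)
    ((ha (n + m)).mul_left (‖v‖ ^ m))
  calc ‖ℓ k‖ ^ n * ‖a k * (Complex.I * ℓ k v) ^ m‖ = ‖ℓ k‖ ^ n * (‖a k‖ * ‖ℓ k v‖ ^ m) := by simp
    _ ≤ ‖ℓ k‖ ^ n * (‖a k‖ * (‖ℓ k‖ * ‖v‖) ^ m) := by gcongr; exact (ℓ k).le_opNorm v
    _ = ‖v‖ ^ m * (‖ℓ k‖ ^ (n + m) * ‖a k‖) := by ring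

lemma HasSummableMoments.mul_list_prod_apply_pow {ι : Type*} (ha : HasSummableMoments ℓ a)
    (v : ι → E) (α : ι → ℕ) (l : List ι) :
    HasSummableMoments ℓ fun k ↦ a k * (l.map fun i ↦ (Complex.I * ℓ k (v i)) ^ α i).prod := by
  induction l with
  | nil => simpa using ha
  | cons i l ih =>
    simpa only [List.map_cons, List.prod_cons, mul_assoc, mul_comm (List.prod _)] using
      ih.mul_apply_pow (v i) (α i)

lemma norm_mul_cexp_I_mul_ofReal (z : ℂ) (r : ℝ) : ‖z * Complex.exp (Complex.I * r)‖ = ‖z‖ := by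
  rw [norm_mul, Complex.norm_exp_I_mul_ofReal, mul_one]

lemma norm_trigSeries_le (ha : Summable fun k ↦ ‖a k‖) (x : E) :
    ‖trigSeries ℓ a x‖ ≤ ∑' k, ‖a k‖ :=
  tsum_of_norm_bounded ha.hasSum fun _ ↦ (norm_mul_cexp_I_mul_ofReal _ _).le

lemma iteratedDeriv_cexp_I_mul_ofReal (n : ℕ) :
    iteratedDeriv n (fun t : ℝ ↦ Complex.exp (Complex.I * t)) =
      fun t : ℝ ↦ Complex.I ^ n * Complex.exp (Complex.I * t) := by
  induction n with
  | zero => simp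
  | succ n ih =>
    ext t
    have h := (((hasDerivAt_id t).ofReal_comp.const_mul Complex.I).cexp).const_mul (Complex.I ^ n)
    rw [iteratedDeriv_succ, ih]
    refine h.deriv.trans ?_
    simp only [id, Complex.ofReal_one]
    ring

lemma contDiff_cexp_I_mul_ofReal {n : WithTop ℕ∞} :
    ContDiff ℝ n fun t : ℝ ↦ Complex.exp (Complex.I * t) :=
  (contDiff_const.mul Complex.ofRealCLM.contDiff).cexp

lemma norm_iteratedFDeriv_mul_cexp_le (z : ℂ) (φ : StrongDual ℝ E) (n : ℕ) (x : E) :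
    ‖iteratedFDeriv ℝ n (fun y ↦ z * Complex.exp (Complex.I * φ y)) x‖ ≤ ‖φ‖ ^ n * ‖z‖ := by
  have comp_right := φ.iteratedFDeriv_comp_right (n := n) (i := n)
    (f := fun t : ℝ ↦ z * Complex.exp (Complex.I * t))
    (contDiff_const.mul contDiff_cexp_I_mul_ofReal) x le_rfl
  have norm_eq (t : ℝ) :
      ‖iteratedFDeriv ℝ n (fun t : ℝ ↦ z * Complex.exp (Complex.I * t)) t‖ = ‖z‖ := by
    rw [norm_iteratedFDeriv_eq_norm_iteratedDeriv, iteratedDeriv_const_mul_field,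
      iteratedDeriv_cexp_I_mul_ofReal, norm_mul, norm_mul_cexp_I_mul_ofReal, norm_pow,
      Complex.norm_I, one_pow, mul_one]
  refine (congrArg norm comp_right).trans_le ?_
  refine (ContinuousMultilinearMap.norm_compContinuousLinearMap_le _ _).trans_eq ?_
  rw [norm_eq, Finset.prod_const, Finset.card_univ, Fintype.card_fin, mul_comm]

lemma contDiff_mul_cexp (z : ℂ) (φ : StrongDual ℝ E) {n : WithTop ℕ∞} :
    ContDiff ℝ n fun y ↦ z * Complex.exp (Complex.I * φ y) :=
  contDiff_const.mul (contDiff_cexp_I_mul_ofReal.comp φ.contDiff)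

lemma fderiv_mul_cexp_apply (z : ℂ) (φ : StrongDual ℝ E) (x v : E) :
    fderiv ℝ (fun y ↦ z * Complex.exp (Complex.I * φ y)) x v =
      z * (Complex.I * φ v) * Complex.exp (Complex.I * φ x) := by
  have hφ : HasFDerivAt (fun y ↦ (φ y : ℂ)) (Complex.ofRealCLM.comp φ) x :=
    (Complex.ofRealCLM.comp φ).hasFDerivAt
  rw [((hφ.const_mul Complex.I).cexp.const_mul z).fderiv]
  simp only [smul_apply, ContinuousLinearMap.comp_apply, Complex.ofRealCLM_apply, smul_eq_mul]
  ring

lemma contDiff_trigSeries (ha : HasSummableMoments ℓ a) : ContDiff ℝ (⊤ : ℕ∞) (trigSeries ℓ a) :=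
  contDiff_tsum (v := fun n k ↦ ‖ℓ k‖ ^ n * ‖a k‖)
    (fun k ↦ contDiff_mul_cexp (a k) (ℓ k)) (fun n _ ↦ ha n)
    fun n k x _ ↦ norm_iteratedFDeriv_mul_cexp_le (a k) (ℓ k) n x

lemma fderiv_trigSeries_apply (ha : HasSummableMoments ℓ a) (x v : E) :
    fderiv ℝ (trigSeries ℓ a) x v = trigSeries ℓ (fun k ↦ a k * (Complex.I * ℓ k v)) x := by
  have norm_le (k : κ) (y : E) :
      ‖fderiv ℝ (fun y ↦ a k * Complex.exp (Complex.I * ℓ k y)) y‖ ≤ ‖ℓ k‖ ^ 1 * ‖a k‖ :=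
    (norm_iteratedFDeriv_one _).symm.trans_le (norm_iteratedFDeriv_mul_cexp_le (a k) (ℓ k) 1 y)
  have summable_at_zero : Summable fun k ↦ a k * Complex.exp (Complex.I * ℓ k (0 : E)) :=
    .of_norm (by simpa only [norm_mul_cexp_I_mul_ofReal] using ha.summable_norm)
  have fderiv_eq := fderiv_tsum_apply (ha 1)
    (fun k ↦ (contDiff_mul_cexp (a k) (ℓ k)).differentiable one_ne_zero) norm_le summable_at_zero x
  calc fderiv ℝ (trigSeries ℓ a) x v
      = (∑' k, fderiv ℝ (fun y ↦ a k * Complex.exp (Complex.I * ℓ k y)) x) v :=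
        congrArg (fun D : E →L[ℝ] ℂ ↦ D v) fderiv_eq
    _ = ∑' k, fderiv ℝ (fun y ↦ a k * Complex.exp (Complex.I * ℓ k y)) x v :=
        (ContinuousLinearMap.apply ℝ ℂ v).map_tsum
          (.of_norm_bounded (ha 1) fun k ↦ norm_le k x)
    _ = trigSeries ℓ (fun k ↦ a k * (Complex.I * ℓ k v)) x :=
        tsum_congr fun k ↦ fderiv_mul_cexp_apply (a k) (ℓ k) x v

end TrigonometricSeries

section MultiIndexDerivatives

variable {κ : Type*} {d : ℕ} {ℓ : κ → StrongDual ℝ (Fin d → ℝ)} {a : κ → ℂ}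

lemma iterate_pderivDir_trigSeries (ha : HasSummableMoments ℓ a) (i : Fin d) (n : ℕ) :
    (pderivDir i)^[n] (trigSeries ℓ a) =
      trigSeries ℓ fun k ↦ a k * (Complex.I * ℓ k (Pi.single i 1)) ^ n := by
  induction n with
  | zero => simp
  | succ n ih =>
    ext x
    rw [Function.iterate_succ_apply', ih, pderivDir,
      fderiv_trigSeries_apply (ha.mul_apply_pow _ n)]
    simp only [pow_succ, mul_assoc]

lemma foldr_iterate_pderivDir_trigSeries (ha : HasSummableMoments ℓ a) (α : Fin d → ℕ)
    (l : List (Fin d)) :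
    (l.map fun i ↦ (pderivDir i)^[α i]).foldr (· ∘ ·) id (trigSeries ℓ a) =
      trigSeries ℓ fun k ↦
        a k * (l.map fun i ↦ (Complex.I * ℓ k (Pi.single i 1)) ^ α i).prod := by
  induction l with
  | nil => simp
  | cons i l ih =>
    rw [List.map_cons, List.foldr_cons, Function.comp_apply, ih,
      iterate_pderivDir_trigSeries (ha.mul_list_prod_apply_pow _ α l)]
    simp only [List.map_cons, List.prod_cons, mul_assoc, mul_comm (List.prod _)]

lemma multiDeriv_trigSeries (ha : HasSummableMoments ℓ a) (α : Fin d → ℕ) :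
    multiDeriv α (trigSeries ℓ a) =
      trigSeries ℓ fun k ↦ a k * ∏ i, (Complex.I * ℓ k (Pi.single i 1)) ^ α i := by
  rw [multiDeriv, List.ofFn_eq_map, foldr_iterate_pderivDir_trigSeries ha]
  simp only [← List.ofFn_eq_map, List.prod_ofFn]

end MultiIndexDerivatives

section IntegerFrequencies

variable {ι : Type*} [Fintype ι]

/-- The frequency `x ↦ k ⬝ x` of the multiple Fourier series on `ℝ^ι` with period `2π` in each
coordinate. -/
noncomputable def intFrequency (k : ι → ℤ) : StrongDual ℝ (ι → ℝ) :=
  ∑ i, (k i : ℝ) • ContinuousLinearMap.proj i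

lemma intFrequency_apply (k : ι → ℤ) (x : ι → ℝ) : intFrequency k x = ∑ i, k i * x i := by
  simp [intFrequency]

lemma intFrequency_single [DecidableEq ι] (k : ι → ℤ) (i : ι) :
    intFrequency k (Pi.single i 1) = k i := by
  simp [intFrequency_apply, Pi.single_apply]

lemma norm_intFrequency_le (k : ι → ℤ) : ‖intFrequency k‖ ≤ Fintype.card ι * ‖k‖ := by
  refine ContinuousLinearMap.opNorm_le_bound _ (by positivity) fun x ↦ ?_
  calc ‖intFrequency k x‖ ≤ ∑ i, ‖k i‖ * ‖x i‖ := by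
        rw [intFrequency_apply]
        exact norm_sum_le_of_le _ fun i _ ↦ by rw [norm_mul, Int.norm_cast_real]
    _ ≤ ∑ _ : ι, ‖k‖ * ‖x‖ := by
        gcongr with i
        exacts [norm_le_pi_norm k i, norm_le_pi_norm x i]
    _ = Fintype.card ι * ‖k‖ * ‖x‖ := by
        rw [Finset.sum_const, nsmul_eq_mul, Finset.card_univ, mul_assoc]

lemma hasSummableMoments_intFrequency {a : (ι → ℤ) → ℂ}
    (ha : ∀ n : ℕ, Summable fun k ↦ ‖k‖ ^ n * ‖a k‖) : HasSummableMoments intFrequency a := by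
  refine fun n ↦ .of_nonneg_of_le (fun _ ↦ by positivity) (fun k ↦ ?_)
    ((ha n).mul_left ((Fintype.card ι : ℝ) ^ n))
  rw [← mul_assoc, ← mul_pow]
  gcongr
  exact norm_intFrequency_le k

lemma norm_mul_prod_intFrequency_single_pow_le [DecidableEq ι] (z : ℂ) (k : ι → ℤ) (α : ι → ℕ) :
    ‖z * ∏ i, (Complex.I * intFrequency k (Pi.single i 1)) ^ α i‖ ≤ ‖k‖ ^ (∑ i, α i) * ‖z‖ := by
  rw [norm_mul, norm_prod, mul_comm, ← Finset.prod_pow_eq_pow_sum]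
  gcongr with i
  rw [intFrequency_single, norm_pow, norm_mul, Complex.norm_I, one_mul, Complex.norm_real,
    Int.norm_cast_real]
  gcongr
  exact norm_le_pi_norm k i

lemma norm_multiDeriv_trigSeries_intFrequency_le {d : ℕ} {a : (Fin d → ℤ) → ℂ}
    (ha : ∀ n : ℕ, Summable fun k ↦ ‖k‖ ^ n * ‖a k‖) (α : Fin d → ℕ) (x : Fin d → ℝ) :
    ‖multiDeriv α (trigSeries intFrequency a) x‖ ≤ ∑' k, ‖k‖ ^ (∑ i, α i) * ‖a k‖ := by
  have coeff_le (k : Fin d → ℤ) := norm_mul_prod_intFrequency_single_pow_le (a k) k α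
  have coeff_summable := (ha (∑ i, α i)).of_nonneg_of_le (fun _ ↦ norm_nonneg _) coeff_le
  rw [multiDeriv_trigSeries (hasSummableMoments_intFrequency ha)]
  exact (norm_trigSeries_le coeff_summable x).trans (coeff_summable.tsum_le_tsum coeff_le (ha _))

end IntegerFrequencies

theorem fourier_decay_gevrey_general {d : ℕ} (f : (Fin d → ℝ) → ℂ) (a : (Fin d → ℤ) → ℂ)
    {A b s : ℝ} (hb : 0 < b) (hs : 0 < s)
    (hrep : ∀ x, f x = ∑' k : Fin d → ℤ, a k * Complex.exp (Complex.I * ∑ i, (k i : ℂ) * (x i : ℂ)))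
    (hcoef : ∀ k : Fin d → ℤ, ‖a k‖ ≤ A * Real.exp (-b * ‖k‖ ^ (1 / s))) :
    ContDiff ℝ (⊤ : ℕ∞) f ∧
    ∃ C' > (0 : ℝ), ∀ (α : Fin d → ℕ) (x : Fin d → ℝ),
      ‖multiDeriv α f x‖ ≤ C' ^ ((∑ i, α i) + 1) * ((∏ i, Nat.factorial (α i) : ℕ) : ℝ) ^ s := by
  have moments := summable_norm_pow_mul_norm_of_le_exp hb hs hcoef
  obtain rfl : f = trigSeries intFrequency a := by
    ext x
    simp [hrep, trigSeries, intFrequency_apply]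
  obtain ⟨C', hC', sum_le⟩ := exists_tsum_norm_pow_sum_mul_norm_le_gevrey hb hs hcoef
  exact ⟨contDiff_trigSeries (hasSummableMoments_intFrequency moments), C', hC', fun α x ↦
    (norm_multiDeriv_trigSeries_intFrequency_le moments α x).trans (sum_le α)⟩

/-- sub-exponential decay of the Fourier coefficients implies that the
function is smooth and s-Gevrey. -/
theorem fourier_decay_gevrey {d : ℕ} (f : (Fin d → ℝ) → ℂ) (a : (Fin d → ℤ) → ℂ)
    (C s : ℝ) (hC : 0 < C) (hs : 1 ≤ s)
    (hrep : ∀ x, f x = ∑' k : Fin d → ℤ, a k * Complex.exp (Complex.I * ∑ i, (k i : ℂ) * (x i : ℂ)))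
    (hcoef : ∀ k : Fin d → ℤ, ‖a k‖ ≤ Real.exp (-(C ^ (-1 / s)) * ‖k‖ ^ ((1 : ℝ) / s))) :
    ContDiff ℝ (⊤ : ℕ∞) f ∧
    ∃ C' > (0 : ℝ), ∀ (α : Fin d → ℕ) (x : Fin d → ℝ),
      ‖multiDeriv α f x‖ ≤ C' ^ ((∑ i, α i) + 1) * ((∏ i, Nat.factorial (α i) : ℕ) : ℝ) ^ s :=
  fourier_decay_gevrey_general f a (Real.rpow_pos_of_pos hC _) (zero_lt_one.trans_le hs) hrep
    fun k ↦ (hcoef k).trans_eq (one_mul _).symm
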